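/- Let F : H → ℝ be a convex, coercive, differentiable function on a real Hilbert space H with nonempty set of minimizers X* which is second order regular, and minimum F*. Assume F satisfies the local Hölderian growth condition G^γ_loc for some γ > 2: there exist K > 0 and ε > 0 such that K·d(x,X*)^γ ≤ F(x) − F* whenever d(x,X*) ≤ ε. Let α > 9/2 + 6/(γ−2) and let x : [t₀, ∞) → H be a twice differentiable solution of ẍ(t) + (α/t)·ẋ(t) + ∇F(x(t)) = 0. Then F(x(t)) − F* = O(t^{−2γ/(γ−2)}) and ‖ẋ(t)‖ = O(t^{−γ/(γ−2)}) as t → ∞, and x(t) converges strongly to a minimizer of F. -/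

import Mathlib

open Filter Metric Topology Asymptotics

/-- The inner second order tangent set to `S` at `xb` in the direction `dir`:
`T²_S(x̄,h) = {w : d(x̄ + t h + ½ t² w, S) = o(t²) as t ↓ 0}`. -/
def innerSecondOrderTangentSet {H : Type*} [NormedAddCommGroup H] [InnerProductSpace ℝ H]
    (S : Set H) (xb dir : H) : Set H :=
  {w : H |
    (fun t : ℝ => Metric.infDist (xb + t • dir + (t ^ 2 / 2) • w) S)
      =o[nhdsWithin (0 : ℝ) (Set.Ioi 0)] fun t : ℝ => t ^ 2}

/-- `S` is second order regular at `x̄ ∈ S` if for every direction `h` and every sequence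
`xₙ = x̄ + tₙ h + ½ tₙ² rₙ` in `S` with `tₙ` monotonically non-increasing to `0` and
`tₙ rₙ → 0`, one has `d(rₙ, T²_S(x̄,h)) → 0`. -/
def SecondOrderRegularAt {H : Type*} [NormedAddCommGroup H] [InnerProductSpace ℝ H]
    (S : Set H) (xb : H) : Prop :=
  ∀ (dir : H) (t : ℕ → ℝ) (r : ℕ → H),
    (∀ n : ℕ, xb + t n • dir + ((t n) ^ 2 / 2) • r n ∈ S) →
    Antitone t → (∀ n : ℕ, 0 < t n) → Tendsto t atTop (𝓝 (0 : ℝ)) →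
    Tendsto (fun n : ℕ => t n • r n) atTop (𝓝 (0 : H)) →
    Tendsto (fun n : ℕ => Metric.infDist (r n) (innerSecondOrderTangentSet S xb dir))
      atTop (𝓝 (0 : ℝ))

/-- `S` is second order regular if it is second order regular at every point of `S`. -/
def SecondOrderRegular {H : Type*} [NormedAddCommGroup H] [InnerProductSpace ℝ H]
    (S : Set H) : Prop :=
  ∀ xb ∈ S, SecondOrderRegularAt S xb

open scoped InnerProductSpace

/-- The Lyapunov energy. -/
noncomputable def avdEnergy {H : Type*} [NormedAddCommGroup H] [InnerProductSpace ℝ H]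
    (F : H → ℝ) (Fs : ℝ) (P : H → H) (x v : ℝ → H) (c lam : ℝ) (t : ℝ) : ℝ :=
  t ^ 2 * (F (x t) - Fs) + c * ‖x t - P (x t)‖ ^ 2 + lam * t * ⟪x t - P (x t), v t⟫_ℝ
    + t ^ 2 / 2 * ‖v t‖ ^ 2

lemma avd_rem_deriv {H : Type*} [NormedAddCommGroup H] [InnerProductSpace ℝ H]
    (x v : ℝ → H) (t : ℝ) (hx : HasDerivAt x (v t) t) (hv : ContinuousAt v t) :
    HasDerivWithinAt (fun z => (z - t) * (‖slope x t z‖ * ‖v z - slope x t z‖)) 0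
      (Set.Ioi t) t := by
  rw [hasDerivWithinAt_iff_tendsto_slope' (by simp)]
  have h1 : Tendsto (slope x t) (𝓝[>] t) (𝓝 (v t)) :=
    (hasDerivWithinAt_iff_tendsto_slope' (by simp)).1 hx.hasDerivWithinAt
  have h2 : Tendsto v (𝓝[>] t) (𝓝 (v t)) := hv.tendsto.mono_left nhdsWithin_le_nhds
  have h3 := h1.norm.mul (h2.sub h1).norm
  simp only [sub_self, norm_zero, mul_zero] at h3
  refine h3.congr' ?_
  filter_upwards [self_mem_nhdsWithin] with z hz
  have hz' : z - t ≠ 0 := sub_ne_zero.2 (ne_of_gt hz)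
  conv_rhs => rw [slope_def_field]
  field_simp
  simp

lemma avd_cross_le {H : Type*} [NormedAddCommGroup H] [InnerProductSpace ℝ H]
    (P : H → H) (hP : ∀ z w, ‖P z - P w‖ ^ 2 ≤ ⟪P z - P w, z - w⟫_ℝ)
    (x v : ℝ → H) (t z : ℝ) (hz : t < z) :
    ⟪x z - P (x z), v z⟫_ℝ ≤ ⟪x z - P (x t), v z⟫_ℝ
      + (z - t) * (‖slope x t z‖ * ‖v z - slope x t z‖) := by
  have hzt : 0 < z - t := sub_pos.2 hz
  have hs : x z - x t = (z - t) • slope x t z := by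
    simp [slope_def_module, smul_smul, mul_inv_cancel₀ hzt.ne']
  have hi := hP (x z) (x t)
  set D := P (x z) - P (x t) with hD
  have e1 : ⟪x z - P (x z), v z⟫_ℝ = ⟪x z - P (x t), v z⟫_ℝ - ⟪D, v z⟫_ℝ := by
    rw [← inner_sub_left]; congr 1; rw [hD]; abel
  have e2 : ⟪D, v z⟫_ℝ = ⟪D, slope x t z⟫_ℝ + ⟪D, v z - slope x t z⟫_ℝ := by
    rw [← inner_add_right]; congr 1; abel
  have hn : ‖D‖ ≤ (z - t) * ‖slope x t z‖ := by
    have h1 : ⟪D, x z - x t⟫_ℝ ≤ ‖D‖ * ‖x z - x t‖ := real_inner_le_norm _ _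
    have h2 : ‖x z - x t‖ = (z - t) * ‖slope x t z‖ := by
      rw [hs, norm_smul, Real.norm_of_nonneg hzt.le]
    rw [← h2]
    by_contra hcon
    push Not at hcon
    nlinarith [norm_nonneg (x z - x t)]
  have hp : 0 ≤ ⟪D, slope x t z⟫_ℝ := by
    rw [hs, inner_smul_right] at hi
    have : 0 ≤ (z - t) * ⟪D, slope x t z⟫_ℝ := le_trans (sq_nonneg _) hi
    exact nonneg_of_mul_nonneg_right this hzt
  have h3 : -⟪D, v z - slope x t z⟫_ℝ ≤ ‖D‖ * ‖v z - slope x t z‖ := by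
    have := abs_real_inner_le_norm D (v z - slope x t z)
    linarith [neg_abs_le ⟪D, v z - slope x t z⟫_ℝ]
  have h4 := mul_le_mul_of_nonneg_right hn (norm_nonneg (v z - slope x t z))
  rw [e1, e2]
  linarith

lemma avd_energy_bound {H : Type*} [NormedAddCommGroup H] [InnerProductSpace ℝ H] [CompleteSpace H]
    (F : H → ℝ) (F' : H → H) (hgrad : ∀ z : H, HasGradientAt F (F' z) z) (Fs : ℝ)
    (P : H → H) (hP : ∀ z w, ‖P z - P w‖ ^ 2 ≤ ⟪P z - P w, z - w⟫_ℝ)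
    (hPd : ∀ z w, ‖z - P z‖ ≤ ‖z - P w‖)
    (hgi : ∀ z, F z - Fs ≤ ⟪F' z, z - P z⟫_ℝ)
    (α T : ℝ) (hT : 0 < T) (x v a : ℝ → H)
    (hx : ∀ t : ℝ, T ≤ t → HasDerivAt x (v t) t)
    (hv : ∀ t : ℝ, T ≤ t → HasDerivAt v (a t) t)
    (hode : ∀ t : ℝ, T ≤ t → a t + (α / t) • v t + F' (x t) = 0)
    (p lam c : ℝ) (hlam : 0 ≤ lam) (hc : c = lam * (α - 1 - p) / 2) (hc0 : 0 ≤ c)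
    (hα : lam + 1 + p / 2 ≤ α)
    (B B' : ℝ → ℝ) (hB : ∀ t, T ≤ t → HasDerivAt B (B' t) t)
    (hB' : ∀ t, T ≤ t → t ^ (p - 1) * ((2 + p - lam) * (t ^ 2 * (F (x t) - Fs))
      + p * c * ‖x t - P (x t)‖ ^ 2) ≤ B' t)
    (hBT : T ^ p * avdEnergy F Fs P x v c lam T ≤ B T) :
    ∀ t, T ≤ t → t ^ p * avdEnergy F Fs P x v c lam t ≤ B t := by
  intro b hb
  have hPc : Continuous P := by
    have : LipschitzWith 1 P := by
      refine LipschitzWith.of_dist_le_mul fun z w => ?_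
      rw [dist_eq_norm, dist_eq_norm]
      have h1 := hP z w
      have h2 := real_inner_le_norm (P z - P w) (z - w)
      simp only [NNReal.coe_one, one_mul]
      by_contra hcon
      push Not at hcon
      nlinarith [norm_nonneg (z - w)]
    exact this.continuous
  have hFc : Continuous F := continuous_iff_continuousAt.2 fun z => (hgrad z).continuousAt
  refine image_le_of_liminf_slope_right_le_deriv_boundary
    (f := fun t => t ^ p * avdEnergy F Fs P x v c lam t) (a := T) (b := b) (B := B) (B' := B')
    ?_ hBT (fun t ht => (hB t ht.1).continuousAt.continuousWithinAt)
    (fun t ht => (hB t ht.1).hasDerivWithinAt) ?_ ⟨hb, le_rfl⟩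
  · intro t ht
    have h1 : ContinuousAt x t := (hx t ht.1).continuousAt
    have h2 : ContinuousAt v t := (hv t ht.1).continuousAt
    have h3 : ContinuousAt (fun t => P (x t)) t := hPc.continuousAt.comp h1
    have h4 : ContinuousAt (fun t => F (x t)) t := hFc.continuousAt.comp h1
    have h5 : ContinuousAt (fun t : ℝ => t ^ p) t :=
      Real.continuousAt_rpow_const _ _ (Or.inl (hT.trans_le ht.1).ne')
    apply ContinuousAt.continuousWithinAt
    unfold avdEnergy
    have h6 : ContinuousAt (fun t => x t - P (x t)) t := h1.sub h3
    have h7 : ContinuousAt (fun t => ⟪x t - P (x t), v t⟫_ℝ) t := h6.inner (𝕜 := ℝ) h2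
    fun_prop
  · intro t ht r hr
    have htT := ht.1
    have ht0 : 0 < t := hT.trans_le ht.1
    have hR := avd_rem_deriv x v t (hx t htT) (hv t htT).continuousAt
    have hxt := hx t htT
    have hvt := hv t htT
    have hFt : HasDerivAt (fun z => F (x z)) ⟪F' (x t), v t⟫_ℝ t := by
      have := (hgrad (x t)).hasFDerivAt.comp_hasDerivAt t hxt
      simpa [Function.comp_def] using this
    have hyt : HasDerivAt (fun z => x z - P (x t)) (v t) t := hxt.sub_const _
    have hM := ((((((hasDerivAt_id t).pow 2).mul (hFt.sub_const Fs)).add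
      (hyt.norm_sq.const_mul c)).hasDerivWithinAt (s := Set.Ioi t)).add
      ((((hasDerivAt_id t).const_mul lam).hasDerivWithinAt (s := Set.Ioi t)).mul
        ((hyt.inner ℝ hvt).hasDerivWithinAt.add hR))).add
      (((((hasDerivAt_id t).pow 2).div_const 2).mul hvt.norm_sq).hasDerivWithinAt (s := Set.Ioi t))
    have hp := (Real.hasDerivAt_rpow_const (x := t) (p := p) (Or.inl ht0.ne')).hasDerivWithinAt
      (s := Set.Ioi t)
    have hG := hp.mul hM
    have hsl := (hasDerivWithinAt_iff_tendsto_slope' (by simp)).1 hG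
    have hat : a t = - ((α / t) • v t) - F' (x t) := by
      have := hode t htT
      rw [← sub_eq_zero, ← this]; abel
    refine Eventually.frequently ?_
    have hlt := hsl.eventually_lt_const (u := r) (lt_of_le_of_lt ?_ hr)
    · filter_upwards [hlt, self_mem_nhdsWithin] with z hz1 hz2
      refine lt_of_le_of_lt ?_ hz1
      have hz0 : 0 < z := ht0.trans hz2
      rw [slope_def_field, slope_def_field]
      have hzt : 0 < z - t := sub_pos.2 hz2
      refine div_le_div_of_nonneg_right ?_ hzt.le
      refine sub_le_sub ?_ ?_
      · simp only [Pi.mul_apply, Pi.add_apply, avdEnergy, Pi.pow_apply, id]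
        refine mul_le_mul_of_nonneg_left ?_ (Real.rpow_nonneg hz0.le _)
        refine add_le_add (add_le_add (add_le_add le_rfl ?_) ?_) le_rfl
        · refine mul_le_mul_of_nonneg_left ?_ hc0
          exact pow_le_pow_left₀ (norm_nonneg _) (hPd _ _) 2
        · exact mul_le_mul_of_nonneg_left (avd_cross_le P hP x v t z hz2) (by positivity)
      · simp [avdEnergy]
    · refine le_trans (b := t ^ (p-1) * ((2 + p) * (t ^ 2 * (F (x t) - Fs))
          - lam * t ^ 2 * ⟪F' (x t), x t - P (x t)⟫_ℝ
          - (α - lam - 1 - p / 2) * (t ^ 2 * ‖v t‖ ^ 2) + p * c * ‖x t - P (x t)‖ ^ 2))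
          (le_of_eq ?_) (le_trans ?_ (hB' t htT))
      · have htp : t ^ p = t ^ (p - 1) * t := by
          rw [← Real.rpow_add_one ht0.ne']; congr 1; ring
        simp only [Pi.mul_apply, Pi.add_apply, Pi.pow_apply, id]
        rw [htp, hat]
        simp only [inner_sub_right, inner_neg_right, inner_smul_right, sub_self, zero_mul, inner_sub_left,
          real_inner_self_eq_norm_sq, add_zero]
        rw [real_inner_comm (x t) (F' (x t)), real_inner_comm (P (x t)) (F' (x t)),
          real_inner_comm (v t) (F' (x t)), real_inner_comm (v t) (x t), real_inner_comm (v t) (P (x t)), hc]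
        field_simp
        norm_num
        ring
      · refine mul_le_mul_of_nonneg_left ?_ (Real.rpow_nonneg ht0.le _)
        have h1 := mul_le_mul_of_nonneg_left (hgi (x t)) (mul_nonneg hlam (sq_nonneg t))
        have h2 : 0 ≤ (α - lam - 1 - p / 2) * (t ^ 2 * ‖v t‖ ^ 2) :=
          mul_nonneg (by linarith) (by positivity)
        linarith

lemma avd_young (A κ γ : ℝ) (hA : 0 < A) (hκ : 0 < κ) (hγ : 2 < γ) :
    ∃ C : ℝ, 0 ≤ C ∧ ∀ τ d : ℝ, 0 < τ → 0 ≤ d →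
      A * d ^ 2 ≤ κ * τ ^ 2 * d ^ γ + C * τ ^ (-(4 / (γ - 2))) := by
  have hg : 0 < γ - 2 := by linarith
  refine ⟨A * (A / κ) ^ (2 / (γ - 2)), by positivity, fun τ d hτ hd => ?_⟩
  set D : ℝ := (A / κ) ^ (1 / (γ - 2)) * τ ^ (-(2 / (γ - 2))) with hD
  have hD0 : 0 < D := by positivity
  have hDg : D ^ (γ - 2) = A / κ * τ ^ (-2 : ℝ) := by
    rw [hD, Real.mul_rpow (by positivity) (by positivity), ← Real.rpow_mul (by positivity),
      ← Real.rpow_mul hτ.le]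
    congr 1
    · rw [one_div_mul_cancel hg.ne', Real.rpow_one]
    · congr 1; field_simp
  have hD2 : D ^ 2 = (A / κ) ^ (2 / (γ - 2)) * τ ^ (-(4 / (γ - 2))) := by
    rw [hD, mul_pow, ← Real.rpow_mul_natCast (by positivity), ← Real.rpow_mul_natCast hτ.le]
    congr 2 <;> push_cast <;> ring
  rcases le_total D d with h | h
  · have hdpos : 0 < d := hD0.trans_le h
    have h1 : A / κ * τ ^ (-2 : ℝ) ≤ d ^ (γ - 2) := by
      rw [← hDg]; exact Real.rpow_le_rpow hD0.le h hg.le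
    have h2 : d ^ γ = d ^ (γ - 2) * d ^ 2 := by
      rw [← Real.rpow_natCast d 2, ← Real.rpow_add hdpos]; congr 1; push_cast; ring
    have h3 : κ * τ ^ 2 * (A / κ * τ ^ (-2 : ℝ)) = A := by
      rw [Real.rpow_neg hτ.le]
      have : τ ^ (2 : ℝ) = τ ^ 2 := by exact_mod_cast Real.rpow_natCast τ 2
      rw [this]; field_simp
    have h4 : A ≤ κ * τ ^ 2 * d ^ (γ - 2) := by
      calc A = κ * τ ^ 2 * (A / κ * τ ^ (-2 : ℝ)) := h3.symm
        _ ≤ _ := mul_le_mul_of_nonneg_left h1 (by positivity)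
    have h5 := mul_le_mul_of_nonneg_right h4 (sq_nonneg d)
    have h6 : 0 ≤ A * (A / κ) ^ (2 / (γ - 2)) * τ ^ (-(4 / (γ - 2))) := by positivity
    rw [h2]; linarith
  · have h1 : d ^ 2 ≤ D ^ 2 := pow_le_pow_left₀ hd h 2
    have h2 := mul_le_mul_of_nonneg_left h1 hA.le
    rw [hD2] at h2
    have h3 : 0 ≤ κ * τ ^ 2 * d ^ γ := by positivity
    linarith

lemma avd_infDist_eq {H : Type*} [NormedAddCommGroup H] [InnerProductSpace ℝ H]
    (X : Set H) (u q : H) (hq : q ∈ X) (h : ∀ w ∈ X, ⟪u - q, w - q⟫_ℝ ≤ 0) :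
    infDist u X = ‖u - q‖ := by
  apply le_antisymm
  · rw [← dist_eq_norm]; exact infDist_le_dist_of_mem hq
  · rw [le_infDist ⟨q, hq⟩]
    intro w hw
    rw [dist_eq_norm]
    have h1 := h w hw
    have h2 : u - w = (u - q) - (w - q) := by abel
    have h3 := norm_sub_sq_real (u - q) (w - q)
    rw [← h2] at h3
    refine abs_le_of_sq_le_sq' ?_ (norm_nonneg _) |>.2
    nlinarith [sq_nonneg ‖w - q‖]

lemma avd_grad_ineq {H : Type*} [NormedAddCommGroup H] [InnerProductSpace ℝ H] [CompleteSpace H]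
    (F : H → ℝ) (F' : H → H) (hconv : ConvexOn ℝ Set.univ F)
    (hgrad : ∀ z : H, HasGradientAt F (F' z) z) (z w : H) :
    F z - F w ≤ ⟪F' z, z - w⟫_ℝ := by
  have h1 : ConvexOn ℝ Set.univ (F ∘ AffineMap.lineMap (k := ℝ) z w) := by
    simpa using hconv.comp_affineMap (AffineMap.lineMap (k := ℝ) z w)
  have h2 : HasDerivAt (F ∘ AffineMap.lineMap (k := ℝ) z w) ⟪F' z, w - z⟫_ℝ 0 := by
    have h0 : HasFDerivAt F ((InnerProductSpace.toDual ℝ H) (F' z))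
        (AffineMap.lineMap (k := ℝ) z w 0) := by simpa using (hgrad z).hasFDerivAt
    simpa using h0.comp_hasDerivAt (0 : ℝ) AffineMap.hasDerivAt_lineMap
  have h3 := h1.le_slope_of_hasDerivAt (Set.mem_univ 0) (Set.mem_univ 1) one_pos h2
  simp [slope_def_field] at h3
  rw [← neg_sub w z, inner_neg_right]
  linarith

lemma avd_rate {H : Type*} [NormedAddCommGroup H] [InnerProductSpace ℝ H] [CompleteSpace H]
    (F : H → ℝ) (F' : H → H) (hgrad : ∀ z : H, HasGradientAt F (F' z) z) (Fs : ℝ)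
    (P : H → H) (hP : ∀ z w, ‖P z - P w‖ ^ 2 ≤ ⟪P z - P w, z - w⟫_ℝ)
    (hPd : ∀ z w, ‖z - P z‖ ≤ ‖z - P w‖)
    (hgi : ∀ z, F z - Fs ≤ ⟪F' z, z - P z⟫_ℝ)
    (γ K : ℝ) (hγ : 2 < γ) (hK : 0 < K)
    (α T : ℝ) (hα : 9 / 2 + 6 / (γ - 2) < α) (hT : 1 ≤ T) (x v a : ℝ → H)
    (hx : ∀ t : ℝ, T ≤ t → HasDerivAt x (v t) t)
    (hv : ∀ t : ℝ, T ≤ t → HasDerivAt v (a t) t)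
    (hode : ∀ t : ℝ, T ≤ t → a t + (α / t) • v t + F' (x t) = 0)
    (hgr : ∀ t, T ≤ t → K * ‖x t - P (x t)‖ ^ γ ≤ F (x t) - Fs) :
    ∃ C : ℝ, ∀ t, T ≤ t → t ^ 2 * (F (x t) - Fs) ≤ C * t ^ (-(4 / (γ - 2))) ∧
      (t * ‖v t‖) ^ 2 ≤ C * t ^ (-(4 / (γ - 2))) := by
  have hg : 0 < γ - 2 := by linarith
  set q : ℝ := 4 / (γ - 2) with hq
  have hq0 : 0 < q := by positivity
  have h6 : 6 / (γ - 2) = 3 / 2 * q := by rw [hq]; ring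
  rw [h6] at hα
  set p : ℝ := q + 1 / 2 with hp
  set lam : ℝ := 2 + p + 1 / 2 with hlam
  set c : ℝ := lam * (α - 1 - p) / 2 with hc
  have hp0 : 0 < p := by linarith
  have hlam0 : 0 < lam := by linarith
  have hc0 : 0 ≤ c := by
    have : 0 ≤ α - 1 - p := by linarith
    positivity
  obtain ⟨C, hC0, hC⟩ := avd_young (p * c + 1) (K / 2) γ (by positivity) (by positivity) hγ
  have hwd : ∀ t, T ≤ t → K / 2 * t ^ 2 * ‖x t - P (x t)‖ ^ γ ≤ t ^ 2 * (F (x t) - Fs) / 2 := by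
    intro t ht
    have := mul_le_mul_of_nonneg_left (hgr t ht) (sq_nonneg t)
    linarith
  have hw0 : ∀ t, T ≤ t → 0 ≤ t ^ 2 * (F (x t) - Fs) := by
    intro t ht
    have h1 : 0 ≤ K * ‖x t - P (x t)‖ ^ γ := by positivity
    have := hgr t ht
    exact mul_nonneg (sq_nonneg _) (by linarith)
  set E := avdEnergy F Fs P x v c lam with hE
  have hbound := avd_energy_bound F F' hgrad Fs P hP hPd hgi α T (by linarith) x v a hx hv hode
    p lam c hlam0.le hc hc0 (by linarith)
    (fun t => |T ^ p * E T| + 2 * C * t ^ (1 / 2 : ℝ)) (fun t => C * t ^ (-(1 / 2) : ℝ))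
    (by
      intro t ht
      have ht0 : 0 < t := by linarith
      have := ((Real.hasDerivAt_rpow_const (x := t) (p := 1 / 2) (Or.inl ht0.ne')).const_mul
        (2 * C)).const_add |T ^ p * E T|
      refine this.congr_deriv ?_
      rw [show (1 / 2 - 1 : ℝ) = -(1 / 2) by norm_num]; ring)
    (by
      intro t ht
      have ht0 : 0 < t := by linarith
      have h1 := hC t ‖x t - P (x t)‖ ht0 (norm_nonneg _)
      have h2 := hwd t ht
      have h3 : t ^ (-(1 / 2) : ℝ) = t ^ (p - 1) * t ^ (-q) := by
        rw [← Real.rpow_add ht0]; congr 1; rw [hp]; ring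
      show _ ≤ C * t ^ (-(1 / 2) : ℝ)
      rw [h3, mul_left_comm C]
      refine mul_le_mul_of_nonneg_left ?_ (Real.rpow_nonneg ht0.le _)
      have h4 : 2 + p - lam = - (1 / 2) := by rw [hlam]; ring
      rw [h4]
      linarith [sq_nonneg ‖x t - P (x t)‖])
    (by
      have : 0 ≤ T := by linarith
      have h1 : 0 ≤ 2 * C * T ^ (1 / 2 : ℝ) := by positivity
      show T ^ p * E T ≤ |T ^ p * E T| + 2 * C * T ^ (1 / 2 : ℝ)
      linarith [le_abs_self (T ^ p * E T)])
  set C1 := |T ^ p * E T| + 2 * C with hC1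
  have hEb : ∀ t, T ≤ t → E t ≤ C1 * t ^ (-q) := by
    intro t ht
    have ht0 : 0 < t := by linarith
    have h1 := hbound t ht
    have h2 : (1 : ℝ) ≤ t ^ (1 / 2 : ℝ) := Real.one_le_rpow (by linarith) (by norm_num)
    have h3 : t ^ p * E t ≤ C1 * t ^ (1 / 2 : ℝ) := by
      refine h1.trans ?_
      rw [hC1, add_mul]
      have := mul_le_mul_of_nonneg_left h2 (abs_nonneg (T ^ p * E T))
      linarith
    have h4 : t ^ (1 / 2 : ℝ) = t ^ p * t ^ (-q) := by
      rw [← Real.rpow_add ht0]; congr 1; rw [hp]; ring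
    rw [h4, mul_left_comm] at h3
    exact le_of_mul_le_mul_left h3 (by positivity)
  obtain ⟨C2, hC20, hC2⟩ := avd_young (lam ^ 2) (K / 2) γ (by positivity) (by positivity) hγ
  have hC10 : 0 ≤ C1 := by positivity
  refine ⟨100 * (C1 + C2), fun t ht => ?_⟩
  have ht0 : 0 < t := by linarith
  have e1 := hEb t ht
  have e2 := hC2 t ‖x t - P (x t)‖ ht0 (norm_nonneg _)
  have e3 := hwd t ht
  have e4 := hw0 t ht
  have e5 : E t = t ^ 2 * (F (x t) - Fs) + (c - lam ^ 2 / 2) * ‖x t - P (x t)‖ ^ 2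
      + ‖lam • (x t - P (x t)) + t • v t‖ ^ 2 / 2 := by
    rw [norm_add_sq_real, norm_smul, norm_smul, inner_smul_left, inner_smul_right,
      Real.norm_of_nonneg hlam0.le, Real.norm_of_nonneg ht0.le, hE]
    simp only [avdEnergy, RCLike.conj_to_real]
    ring
  have e6 : (t * ‖v t‖) ^ 2 ≤ 2 * ‖lam • (x t - P (x t)) + t • v t‖ ^ 2
      + 2 * (lam ^ 2 * ‖x t - P (x t)‖ ^ 2) := by
    have h1 : t * ‖v t‖ ≤ ‖lam • (x t - P (x t)) + t • v t‖ + lam * ‖x t - P (x t)‖ := by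
      have := norm_sub_le (lam • (x t - P (x t)) + t • v t) (lam • (x t - P (x t)))
      rw [add_sub_cancel_left, norm_smul, norm_smul, Real.norm_of_nonneg hlam0.le,
        Real.norm_of_nonneg ht0.le] at this
      exact this
    have h2 := pow_le_pow_left₀ (by positivity) h1 2
    nlinarith [sq_nonneg (‖lam • (x t - P (x t)) + t • v t‖ - lam * ‖x t - P (x t)‖)]
  have e7 : 0 ≤ c * ‖x t - P (x t)‖ ^ 2 := by positivity
  have e8 : 0 ≤ ‖lam • (x t - P (x t)) + t • v t‖ ^ 2 := sq_nonneg _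
  have e9 : 0 ≤ C1 * t ^ (-q) := by positivity
  have e10 : 0 ≤ C2 * t ^ (-q) := by positivity
  rw [e5] at e1
  constructor <;> linarith

/-- Trajectories of the AVD system `ẍ + (α/t) ẋ + ∇F(x) = 0` for a convex, coercive,
differentiable `F` with a second order regular set of minimizers, under a local Hölderian
growth condition `G^γ_loc` (γ > 2) and `α > 9/2 + 6/(γ-2)`:
`F(x(t)) - F* = O(t^{-2γ/(γ-2)})`, `‖ẋ(t)‖ = O(t^{-γ/(γ-2)})`, and the trajectory
converges strongly to a minimizer. -/
theorem avd_holder_convergence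
    {H : Type*} [NormedAddCommGroup H] [InnerProductSpace ℝ H] [CompleteSpace H]
    (F : H → ℝ) (F' : H → H)
    (hconv : ConvexOn ℝ Set.univ F)
    (hgrad : ∀ z : H, HasGradientAt F (F' z) z)
    (hcoercive : Tendsto F (Bornology.cobounded H) atTop)
    (Xstar : Set H) (hXstar : Xstar = {z : H | ∀ w : H, F z ≤ F w})
    (hXne : Xstar.Nonempty)
    (hreg : SecondOrderRegular Xstar)
    (Fstar : ℝ) (hFstar : ∀ z ∈ Xstar, F z = Fstar)
    -- local Hölderian growth condition `G^γ_loc`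
    (γ K ε : ℝ) (hγ : 2 < γ) (hK : 0 < K) (hε : 0 < ε)
    (hgrowth : ∀ z : H, infDist z Xstar ≤ ε → K * infDist z Xstar ^ γ ≤ F z - Fstar)
    -- a twice differentiable solution of (AVD) on `[t₀, ∞)`
    (α t₀ : ℝ) (hα : 9 / 2 + 6 / (γ - 2) < α)
    (x v a : ℝ → H)
    (hx : ∀ t : ℝ, t₀ ≤ t → HasDerivAt x (v t) t)
    (hv : ∀ t : ℝ, t₀ ≤ t → HasDerivAt v (a t) t)
    (hode : ∀ t : ℝ, t₀ ≤ t → a t + (α / t) • v t + F' (x t) = 0) :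
    ((fun t : ℝ => F (x t) - Fstar) =O[atTop] fun t : ℝ => t ^ (-(2 * γ) / (γ - 2))) ∧
    ((fun t : ℝ => ‖v t‖) =O[atTop] fun t : ℝ => t ^ (-γ / (γ - 2))) ∧
    ∃ xlim ∈ Xstar, Tendsto x atTop (𝓝 xlim) := by
  have hFc : Continuous F := continuous_iff_continuousAt.2 fun z => (hgrad z).continuousAt
  have hmem : ∀ z, z ∈ Xstar ↔ F z ≤ Fstar := by
    obtain ⟨z0, hz0⟩ := hXne
    intro z
    constructor
    · exact fun h => (hFstar z h).le
    · intro h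
      have h0 := hFstar z0 hz0
      rw [hXstar] at hz0 ⊢
      intro w
      exact (h.trans_eq h0.symm).trans (hz0 w)
  have hXeq : Xstar = {z ∈ (Set.univ : Set H) | F z ≤ Fstar} := by
    ext z; simp [hmem]
  have hXc : Convex ℝ Xstar := by rw [hXeq]; exact hconv.convex_le _
  have hXcl : IsClosed Xstar := by
    have : Xstar = {z | F z ≤ Fstar} := by ext z; simp [hmem]
    rw [this]; exact isClosed_le hFc continuous_const
  have hproj : ∀ z, ∃ u ∈ Xstar, ∀ w ∈ Xstar, ⟪z - u, w - u⟫_ℝ ≤ 0 := by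
    intro z
    obtain ⟨u, hu, hu'⟩ := exists_norm_eq_iInf_of_complete_convex hXne hXcl.isComplete hXc z
    exact ⟨u, hu, (norm_eq_iInf_iff_real_inner_le_zero hXc hu).1 hu'⟩
  choose P hPm hPi using hproj
  have hdist : ∀ z, infDist z Xstar = ‖z - P z‖ := fun z =>
    avd_infDist_eq Xstar z (P z) (hPm z) (hPi z)
  have hPd : ∀ z w, ‖z - P z‖ ≤ ‖z - P w‖ := by
    intro z w
    rw [← hdist, ← dist_eq_norm]
    exact infDist_le_dist_of_mem (hPm w)
  have hP : ∀ z w, ‖P z - P w‖ ^ 2 ≤ ⟪P z - P w, z - w⟫_ℝ := by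
    intro z w
    have h1 := hPi z (P w) (hPm w)
    have h2 := hPi w (P z) (hPm z)
    rw [← real_inner_self_eq_norm_sq]
    have h3 : ⟪z - P z, P w - P z⟫_ℝ = - ⟪P z - P w, z - P z⟫_ℝ := by
      rw [real_inner_comm, ← inner_neg_left, neg_sub]
    have h4 : ⟪w - P w, P z - P w⟫_ℝ = ⟪P z - P w, w - P w⟫_ℝ := real_inner_comm _ _
    rw [h3] at h1
    rw [h4] at h2
    have h5 : ⟪P z - P w, z - w⟫_ℝ = ⟪P z - P w, z - P z⟫_ℝ - ⟪P z - P w, w - P w⟫_ℝ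
        + ⟪P z - P w, P z - P w⟫_ℝ := by
      rw [← inner_sub_right, ← inner_add_right]; congr 1; abel
    linarith
  have hgi : ∀ z, F z - Fstar ≤ ⟪F' z, z - P z⟫_ℝ := by
    intro z
    rw [← hFstar (P z) (hPm z)]
    exact avd_grad_ineq F F' hconv hgrad z (P z)
  have hnear : ∀ z, F z - Fstar < K * ε ^ γ → ‖z - P z‖ ≤ ε := by
    intro z hz
    by_contra hcon
    push Not at hcon
    have hd0 : 0 < ‖z - P z‖ := hε.trans hcon
    set s := ε / ‖z - P z‖ with hs
    have hs0 : 0 < s := by positivity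
    have hs1 : s ≤ 1 := by rw [hs, div_le_one hd0]; exact hcon.le
    set u := P z + s • (z - P z) with hu
    have hus : u - P z = s • (z - P z) := by rw [hu]; abel
    have hdu : infDist u Xstar = ε := by
      rw [avd_infDist_eq Xstar u (P z) (hPm z), hus, norm_smul, Real.norm_of_nonneg hs0.le, hs]
      · field_simp
      · intro w hw
        rw [hus, inner_smul_left]
        simp only [RCLike.conj_to_real]
        exact mul_nonpos_of_nonneg_of_nonpos hs0.le (hPi z w hw)
    have h1 := hgrowth u hdu.le
    rw [hdu] at h1
    have h2 := hconv.2 (Set.mem_univ (P z)) (Set.mem_univ z) (sub_nonneg.2 hs1) hs0.le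
      (by ring)
    have h3 : (1 - s) • P z + s • z = u := by
      rw [hu, sub_smul, one_smul, smul_sub]; abel
    rw [h3, hFstar _ (hPm z)] at h2
    simp only [smul_eq_mul] at h2
    have h4 : 0 ≤ F z - Fstar := by
      have := hPm z
      rw [hXstar] at this
      rw [← hFstar _ (hPm z)]
      linarith [this z]
    nlinarith
  have hg : 0 < γ - 2 := by linarith
  have hα3 : 9 / 2 < α := by
    have : 0 < 6 / (γ - 2) := by positivity
    linarith
  obtain ⟨T0, hT0⟩ : ∃ T0, T0 = max t₀ 1 := ⟨_, rfl⟩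
  have hT1 : 1 ≤ T0 := hT0 ▸ le_max_right _ _
  have hTt : t₀ ≤ T0 := hT0 ▸ le_max_left _ _
  obtain ⟨C1, hC1⟩ : ∃ C1 : ℝ, ∀ t, T0 ≤ t → t ^ 2 * (F (x t) - Fstar) ≤ C1 := by
    refine ⟨T0 ^ (0 : ℝ) * avdEnergy F Fstar P x v (α - 1) 2 T0, fun t ht => ?_⟩
    have h := avd_energy_bound F F' hgrad Fstar P hP hPd hgi α T0 (by linarith) x v a
      (fun t ht => hx t (hTt.trans ht)) (fun t ht => hv t (hTt.trans ht))
      (fun t ht => hode t (hTt.trans ht)) 0 2 (α - 1) (by norm_num) (by ring) (by linarith)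
      (by linarith) (fun _ => T0 ^ (0 : ℝ) * avdEnergy F Fstar P x v (α - 1) 2 T0) (fun _ => 0)
      (fun t _ => hasDerivAt_const _ _) (fun t _ => by simp) le_rfl t ht
    refine le_trans ?_ h
    have ht0 : 0 < t := by linarith
    rw [Real.rpow_zero, one_mul]
    have e5 : avdEnergy F Fstar P x v (α - 1) 2 t = t ^ 2 * (F (x t) - Fstar)
        + (α - 3) * ‖x t - P (x t)‖ ^ 2
        + ‖(2 : ℝ) • (x t - P (x t)) + t • v t‖ ^ 2 / 2 := by
      rw [norm_add_sq_real, norm_smul, norm_smul, inner_smul_left, inner_smul_right,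
        Real.norm_of_nonneg zero_le_two, Real.norm_of_nonneg ht0.le]
      simp only [avdEnergy, RCLike.conj_to_real]
      ring
    rw [e5]
    have : 0 ≤ (α - 3) * ‖x t - P (x t)‖ ^ 2 := mul_nonneg (by linarith) (sq_nonneg _)
    nlinarith [sq_nonneg ‖(2 : ℝ) • (x t - P (x t)) + t • v t‖]
  have hKe : 0 < K * ε ^ γ := by positivity
  obtain ⟨T, hTT0, hTC⟩ : ∃ T, T0 ≤ T ∧ C1 < T * (K * ε ^ γ) := by
    refine ⟨max T0 (C1 / (K * ε ^ γ) + 1), le_max_left _ _, ?_⟩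
    have h1 : C1 < (C1 / (K * ε ^ γ) + 1) * (K * ε ^ γ) := by
      rw [add_mul, div_mul_cancel₀ _ hKe.ne']; linarith
    exact h1.trans_le (mul_le_mul_of_nonneg_right (le_max_right _ _) hKe.le)
  have hTone : 1 ≤ T := hT1.trans hTT0
  have htT : t₀ ≤ T := hTt.trans hTT0
  have hgr : ∀ t, T ≤ t → K * ‖x t - P (x t)‖ ^ γ ≤ F (x t) - Fstar := by
    intro t ht
    rw [← hdist]
    apply hgrowth
    rw [hdist]
    apply hnear
    have h1 := hC1 t (hTT0.trans ht)
    have ht1 : 1 ≤ t := hTone.trans ht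
    have h2 : T * (K * ε ^ γ) ≤ t ^ 2 * (K * ε ^ γ) := by
      refine mul_le_mul_of_nonneg_right ?_ hKe.le
      nlinarith
    exact lt_of_mul_lt_mul_left (lt_of_le_of_lt h1 (hTC.trans_le h2)) (sq_nonneg t)
  obtain ⟨C, hC⟩ := avd_rate F F' hgrad Fstar P hP hPd hgi γ K hγ hK α T hα hTone x v a
    (fun t ht => hx t (htT.trans ht)) (fun t ht => hv t (htT.trans ht))
    (fun t ht => hode t (htT.trans ht)) hgr
  have hw0 : ∀ z, 0 ≤ F z - Fstar := by
    intro z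
    have := hPm z
    rw [hXstar] at this
    rw [← hFstar _ (hPm z)]
    linarith [this z]
  have hFb : ∀ t, T ≤ t → F (x t) - Fstar ≤ C * t ^ (-(2 * γ) / (γ - 2)) := by
    intro t ht
    have ht0 : 0 < t := by linarith
    have h1 := (hC t ht).1
    have h2 : t ^ (-(4 / (γ - 2))) = t ^ 2 * t ^ (-(2 * γ) / (γ - 2)) := by
      rw [← Real.rpow_natCast t 2, ← Real.rpow_add ht0]
      congr 1; push_cast; field_simp; ring
    rw [h2, mul_left_comm] at h1
    exact le_of_mul_le_mul_left h1 (by positivity)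
  have hvb : ∀ t, T ≤ t → ‖v t‖ ≤ √C * t ^ (-γ / (γ - 2)) := by
    intro t ht
    have ht0 : 0 < t := by linarith
    have h1 := (hC t ht).2
    have h2 : t ^ (-(4 / (γ - 2))) = (t * t ^ (-γ / (γ - 2))) ^ 2 := by
      have h3 : t * t ^ (-γ / (γ - 2)) = t ^ (1 + -γ / (γ - 2)) := by
        rw [Real.rpow_add ht0, Real.rpow_one]
      rw [h3, ← Real.rpow_mul_natCast ht0.le]
      congr 1; push_cast; field_simp; ring
    have h0 : 0 ≤ t * t ^ (-γ / (γ - 2)) := by positivity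
    rw [h2] at h1
    have h4 := Real.sqrt_le_sqrt h1
    rw [Real.sqrt_sq (by positivity), Real.sqrt_mul' _ (sq_nonneg _), Real.sqrt_sq h0,
      mul_left_comm] at h4
    exact le_of_mul_le_mul_left h4 ht0
  have hFO : (fun t : ℝ => F (x t) - Fstar) =O[atTop] fun t : ℝ => t ^ (-(2 * γ) / (γ - 2)) := by
    refine IsBigO.of_bound C ?_
    filter_upwards [eventually_ge_atTop T] with t ht
    have ht0 : 0 < t := by linarith
    rw [Real.norm_of_nonneg (hw0 _), Real.norm_of_nonneg (by positivity)]
    exact hFb t ht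
  refine ⟨hFO, ?_, ?_⟩
  · refine IsBigO.of_bound (√C) ?_
    filter_upwards [eventually_ge_atTop T] with t ht
    have ht0 : 0 < t := by linarith
    rw [norm_norm, Real.norm_of_nonneg (by positivity)]
    exact hvb t ht
  · have hlim := MeasureTheory.tendsto_limUnder_of_hasDerivAt_of_integrableOn_Ioi
      (f := x) (f' := v) (a := T) (fun t ht => hx t (htT.trans (le_of_lt ht))) ?_
    · refine ⟨_, ?_, hlim⟩
      rw [hmem]
      have h1 : Tendsto (fun t => F (x t) - Fstar) atTop (𝓝 (F (atTop.limUnder x) - Fstar)) :=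
        ((hFc.tendsto _).comp hlim).sub_const _
      have h2 : Tendsto (fun t : ℝ => t ^ (-(2 * γ) / (γ - 2))) atTop (𝓝 0) := by
        have := tendsto_rpow_neg_atTop (y := 2 * γ / (γ - 2)) (by positivity)
        simpa [neg_div] using this
      have h3 := tendsto_nhds_unique h1 (hFO.trans_tendsto h2)
      linarith
    · have hint : MeasureTheory.IntegrableOn (fun t : ℝ => √C * t ^ (-γ / (γ - 2)))
          (Set.Ioi T) := by
        refine MeasureTheory.Integrable.const_mul (integrableOn_Ioi_rpow_of_lt ?_ (by linarith)) _
        rw [div_lt_iff₀ hg]; linarith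
      refine MeasureTheory.Integrable.mono' hint ?_ ?_
      · have : ContinuousOn v (Set.Ioi T) := fun t ht =>
          (hv t (htT.trans (le_of_lt ht))).continuousAt.continuousWithinAt
        exact this.aestronglyMeasurable measurableSet_Ioi
      · filter_upwards [MeasureTheory.ae_restrict_mem measurableSet_Ioi] with t ht
        exact hvb t (le_of_lt ht)
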